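/- Let 1 ≤ p < ∞ and -1 < α < ∞, and let φ be an inner function. Then the set φ·H^p(𝔻) = { φ·h : h ∈ H^p(𝔻) } is a linear subspace of the weighted Bergman space A^p_α(𝔻) that is not closed in A^p_α(𝔻) with respect to the A^p_α norm. -/

import Mathlib

/-!
Writing the Bergman integral in polar coordinates turns it into an integral of the Hardy means
against `(1 - r²)^α r dr`, which is finite because `α > -1`; together with the boundedness of `φ`
this gives `φ H^p ⊆ A^p_α` (`memBergman_of_hardyIntegral_le`, `memBergman_mul`).

For the failure of closedness take `f(z) = (1 - z)^(-1/p)`, so that `|f|^p = |1 - z|⁻¹`. Its Hardy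
means diverge logarithmically as `r → 1`, hence `f ∉ H^p` (`not_memHardy_cauchyRoot`), but they are
`O((1 - r)^(-ε))` for every `ε > 0`, hence `f ∈ A^p_α` (`memBergman_cauchyRoot`). The dilates
`f(rₙ z)` with `rₙ → 1⁻` are bounded analytic functions, and `|1 - z| ≤ 2 |1 - rz|` lets `3 |f|`
dominate their distance to `f`, so `φ(z) f(rₙ z) → φ(z) f(z)` in the Bergman norm
(`tendsto_bergmanNorm_dilate`). If `φ f = φ h` with `h ∈ H^p`, then `f = h` on the disk by the
identity theorem, since `φ` is not identically zero; this contradicts `f ∉ H^p`.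
-/

open MeasureTheory Filter Set Topology Real

noncomputable section

/-- The open unit disk in the complex plane. -/
def unitDisk : Set ℂ := Metric.ball 0 1

/-- The integrand `|f z|^p (1 - |z|^2)^α` appearing in the weighted Bergman norm. -/
def bergmanIntegrand (p α : ℝ) (f : ℂ → ℂ) (z : ℂ) : ℝ :=
  ‖f z‖ ^ p * (1 - ‖z‖ ^ 2) ^ α

/-- Membership in the weighted Bergman space `A^p_α(𝔻)`. -/
def MemBergman (p α : ℝ) (f : ℂ → ℂ) : Prop :=
  DifferentiableOn ℂ f unitDisk ∧
    IntegrableOn (bergmanIntegrand p α f) unitDisk volume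

/-- The weighted Bergman norm `‖f‖_{A^p_α}`. -/
def bergmanNorm (p α : ℝ) (f : ℂ → ℂ) : ℝ :=
  (((α + 1) / π) * ∫ z in unitDisk, bergmanIntegrand p α f z ∂volume) ^ (1 / p)

/-- The mean `(1/(2π)) ∫_0^{2π} |f(r e^{iθ})|^p dθ`. -/
def hardyIntegral (p : ℝ) (f : ℂ → ℂ) (r : ℝ) : ℝ :=
  (1 / (2 * π)) * ∫ θ in (0:ℝ)..(2 * π), ‖f ((r : ℂ) * Complex.exp (θ * Complex.I))‖ ^ p

/-- Membership in the Hardy space `H^p(𝔻)`. -/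
def MemHardy (p : ℝ) (f : ℂ → ℂ) : Prop :=
  DifferentiableOn ℂ f unitDisk ∧
    ∃ C : ℝ, ∀ r : ℝ, 0 ≤ r → r < 1 → hardyIntegral p f r ≤ C

/-- The Hardy norm `‖f‖_{H^p}`. -/
def hardyNorm (p : ℝ) (f : ℂ → ℂ) : ℝ :=
  ⨆ r : Set.Ico (0:ℝ) 1, (hardyIntegral p f ↑r) ^ (1 / p)

/-- `f` has the radial limit `L` at the boundary point `e^{iθ}`. -/
def HasRadialLimit (f : ℂ → ℂ) (θ : ℝ) (L : ℂ) : Prop :=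
  Tendsto (fun r : ℝ => f ((r : ℂ) * Complex.exp (θ * Complex.I))) (𝓝[<] (1:ℝ)) (𝓝 L)

/-- `φ` is an inner function: bounded analytic on the disk, with radial limits of
modulus one at almost every boundary point. -/
def IsInner (φ : ℂ → ℂ) : Prop :=
  DifferentiableOn ℂ φ unitDisk ∧ (∃ C : ℝ, ∀ z ∈ unitDisk, ‖φ z‖ ≤ C) ∧
    ∀ᵐ θ ∂(volume.restrict (Set.Ico (0:ℝ) (2 * π))),
      ∃ L : ℂ, ‖L‖ = 1 ∧ HasRadialLimit φ θ L

/-- `g` belongs to `φ · H^p(𝔻)` (as a space of analytic functions on the disk). -/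
def MemMulHardy (p : ℝ) (φ g : ℂ → ℂ) : Prop :=
  ∃ h : ℂ → ℂ, MemHardy p h ∧ Set.EqOn g (fun z => φ z * h z) unitDisk

/-- The lacunary series `f₀(z) = ∑_{k=1}^∞ z^{3^{k-1}}`. -/
def lacunary (z : ℂ) : ℂ := ∑' k : ℕ, z ^ (3 ^ k)

/-! ### Integral means on circles and the Bergman integrand -/

lemma circle_mem_unitDisk {r : ℝ} (h0 : 0 ≤ r) (h1 : r < 1) (θ : ℝ) :
    (r : ℂ) * Complex.exp (θ * Complex.I) ∈ unitDisk := by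
  simp [unitDisk, Complex.norm_exp_ofReal_mul_I, abs_of_nonneg h0, h1]

lemma continuous_circle_rpow {p : ℝ} (hp : 0 ≤ p) {f : ℂ → ℂ} (hf : ContinuousOn f unitDisk)
    {r : ℝ} (h0 : 0 ≤ r) (h1 : r < 1) :
    Continuous fun θ : ℝ => ‖f ((r : ℂ) * Complex.exp (θ * Complex.I))‖ ^ p := by
  have : Continuous fun θ : ℝ => f ((r : ℂ) * Complex.exp (θ * Complex.I)) :=
    hf.comp_continuous (by fun_prop) (circle_mem_unitDisk h0 h1)
  exact this.norm.rpow_const fun _ => Or.inr hp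

lemma hardyIntegral_eq_symm (p : ℝ) (f : ℂ → ℂ) (r : ℝ) :
    hardyIntegral p f r =
      (1 / (2 * π)) * ∫ θ in (-π)..π, ‖f ((r : ℂ) * Complex.exp (θ * Complex.I))‖ ^ p := by
  have hper : Function.Periodic
      (fun θ : ℝ => ‖f ((r : ℂ) * Complex.exp (θ * Complex.I))‖ ^ p) (2 * π) := by
    intro θ
    have : Complex.exp (((θ + 2 * π : ℝ) : ℂ) * Complex.I) = Complex.exp (θ * Complex.I) := by
      rw [show (((θ + 2 * π : ℝ) : ℂ) * Complex.I) = θ * Complex.I + 2 * π * Complex.I by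
        push_cast; ring, Complex.exp_periodic]
    simp only [this]
  have := hper.intervalIntegral_add_eq 0 (-π)
  rw [hardyIntegral]
  rw [show (0:ℝ) + 2 * π = 2 * π by ring, show -π + 2 * π = π by ring] at this
  rw [this]

lemma continuousOn_bergmanIntegrand {p : ℝ} (hp : 0 ≤ p) (α : ℝ) {f : ℂ → ℂ}
    (hf : ContinuousOn f unitDisk) : ContinuousOn (bergmanIntegrand p α f) unitDisk := by
  refine (hf.norm.rpow_const fun _ _ => Or.inr hp).mul ?_
  refine ContinuousOn.rpow_const (by fun_prop) fun z hz => Or.inl ?_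
  have : ‖z‖ < 1 := by simpa [unitDisk] using hz
  have := norm_nonneg z
  nlinarith

lemma bergmanIntegrand_nonneg (p α : ℝ) (f : ℂ → ℂ) {z : ℂ} (hz : z ∈ unitDisk) :
    0 ≤ bergmanIntegrand p α f z := by
  have : ‖z‖ < 1 := by simpa [unitDisk] using hz
  have := norm_nonneg z
  exact mul_nonneg (by positivity) (rpow_nonneg (by nlinarith) _)

lemma weight_le (α : ℝ) {r : ℝ} (h0 : 0 ≤ r) (h1 : r < 1) :
    (1 - r ^ 2) ^ α ≤ 2 ^ |α| * (1 - r) ^ α := by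
  rw [show 1 - r ^ 2 = (1 + r) * (1 - r) by ring, mul_rpow (by linarith) (by linarith)]
  refine mul_le_mul_of_nonneg_right ?_ (rpow_nonneg (by linarith) _)
  calc (1 + r) ^ α ≤ (1 + r) ^ |α| := rpow_le_rpow_of_exponent_le (by linarith) (le_abs_self α)
    _ ≤ 2 ^ |α| := rpow_le_rpow (by linarith) (by linarith) (abs_nonneg _)

/-- In polar coordinates the Bergman integral is a weighted integral of the Hardy means, so means
growing no faster than `(1 - r)^(-ε)` with `ε < α + 1` give a function in `A^p_α`. -/
lemma memBergman_of_hardyIntegral_le {p α ε C : ℝ} (hp : 0 ≤ p) (hε : -1 < α - ε) {f : ℂ → ℂ}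
    (hf : DifferentiableOn ℂ f unitDisk)
    (hC : ∀ r : ℝ, 0 ≤ r → r < 1 → hardyIntegral p f r ≤ C * (1 - r) ^ (-ε)) :
    MemBergman p α f := by
  have hmeas : MeasurableSet unitDisk := Metric.isOpen_ball.measurableSet
  refine ⟨hf, (continuousOn_bergmanIntegrand hp α hf.continuousOn).aestronglyMeasurable hmeas, ?_⟩
  rw [hasFiniteIntegral_iff_ofReal (ae_restrict_of_forall_mem hmeas fun z hz =>
    bergmanIntegrand_nonneg p α f hz)]
  set w : ℝ → ℝ := fun r => 2 ^ |α| * (2 * π * C) * (1 - r) ^ (α - ε) with hw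
  have hwi : IntegrableOn w (Ioo 0 1) := by
    have h := (intervalIntegral.intervalIntegrable_rpow' (a := 0) (b := 1) hε).comp_sub_left 1
    simp only [sub_zero, sub_self] at h
    exact (((intervalIntegrable_iff_integrableOn_Ioo_of_le zero_le_one).1 h.symm)).const_mul _
  have hslice : ∀ r ∈ Ioo (0:ℝ) 1, ∫⁻ θ in Ioo (-π) π,
      ENNReal.ofReal (bergmanIntegrand p α f ((r : ℂ) * Complex.exp (θ * Complex.I)))
        ≤ ENNReal.ofReal (w r) := by
    rintro r ⟨h0, h1⟩
    have hcont := continuous_circle_rpow hp hf.continuousOn h0.le h1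
    have hnorm : ∀ θ : ℝ, ‖(r : ℂ) * Complex.exp (θ * Complex.I)‖ = r := fun θ => by
      simp [Complex.norm_exp_ofReal_mul_I, abs_of_pos h0]
    have hwt : 0 ≤ (1 - r ^ 2) ^ α := rpow_nonneg (by nlinarith) _
    have hI : IntegrableOn (fun θ : ℝ => ‖f ((r : ℂ) * Complex.exp (θ * Complex.I))‖ ^ p *
        (1 - r ^ 2) ^ α) (Ioo (-π) π) :=
      ((hcont.mul continuous_const).integrableOn_Icc).mono_set Ioo_subset_Icc_self
    simp only [bergmanIntegrand, hnorm]
    rw [← ofReal_integral_eq_lintegral_ofReal hI (Eventually.of_forall fun θ => by positivity)]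
    refine ENNReal.ofReal_le_ofReal ?_
    have h2 := hC r h0.le h1
    rw [hardyIntegral_eq_symm, one_div, inv_mul_le_iff₀ (by positivity),
      intervalIntegral.integral_of_le (by linarith [pi_pos]), integral_Ioc_eq_integral_Ioo] at h2
    have hpos : 0 ≤ ∫ θ in Ioo (-π) π, ‖f ((r : ℂ) * Complex.exp (θ * Complex.I))‖ ^ p :=
      integral_nonneg fun θ => by positivity
    rw [integral_mul_const]
    calc _ ≤ (2 * π * (C * (1 - r) ^ (-ε))) * (2 ^ |α| * (1 - r) ^ α) :=
          mul_le_mul h2 (weight_le α h0.le h1) hwt (hpos.trans h2)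
      _ = w r := by
          rw [hw, sub_eq_add_neg α ε]
          simp only [rpow_add (sub_pos.2 h1)]
          ring
  calc ∫⁻ z in unitDisk, ENNReal.ofReal (bergmanIntegrand p α f z)
      = ∫⁻ z, unitDisk.indicator (fun z => ENNReal.ofReal (bergmanIntegrand p α f z)) z :=
        (lintegral_indicator hmeas _).symm
    _ = ∫⁻ q in Ioi (0:ℝ) ×ˢ Ioo (-π) π, ENNReal.ofReal q.1 • unitDisk.indicator
          (fun z => ENNReal.ofReal (bergmanIntegrand p α f z)) (Complex.polarCoord.symm q) :=
        (Complex.lintegral_comp_polarCoord_symm _).symm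
    _ ≤ ∫⁻ r in Ioi (0:ℝ), ∫⁻ θ in Ioo (-π) π, ENNReal.ofReal r • unitDisk.indicator
          (fun z => ENNReal.ofReal (bergmanIntegrand p α f z))
            (Complex.polarCoord.symm (r, θ)) := by
        rw [Measure.volume_eq_prod, ← Measure.prod_restrict]
        exact lintegral_prod_le _
    _ ≤ ∫⁻ r in Ioi (0:ℝ), (Ioo (0:ℝ) 1).indicator (fun r => ENNReal.ofReal (w r)) r := by
        refine setLIntegral_mono' measurableSet_Ioi fun r hr => ?_
        have hr0 : 0 < r := hr
        have hsymm : ∀ θ : ℝ, Complex.polarCoord.symm (r, θ)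
            = (r : ℂ) * Complex.exp (θ * Complex.I) := fun θ => by
          rw [Complex.polarCoord_symm_apply, Complex.exp_mul_I]
          simp
        simp only [hsymm]
        by_cases h1 : r < 1
        · rw [indicator_of_mem (show r ∈ Ioo (0:ℝ) 1 from ⟨hr0, h1⟩)]
          refine le_trans (lintegral_mono fun θ => ?_) (hslice r ⟨hr0, h1⟩)
          simp only
          rw [indicator_of_mem (circle_mem_unitDisk hr0.le h1 θ), smul_eq_mul]
          exact mul_le_of_le_one_left' (by simpa using h1.le)
        · have : ∀ θ : ℝ, (r : ℂ) * Complex.exp (θ * Complex.I) ∉ unitDisk := fun θ => by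
            simpa [unitDisk, Complex.norm_exp_ofReal_mul_I, abs_of_pos hr0] using h1
          simp [indicator_of_notMem (this _)]
    _ = ∫⁻ r in Ioo (0:ℝ) 1, ENNReal.ofReal (w r) := by
        rw [setLIntegral_indicator measurableSet_Ioo,
          inter_eq_left.2 Ioo_subset_Ioi_self]
    _ < ⊤ := hwi.lintegral_lt_top

/-- Bounded analytic multipliers act on Bergman spaces. -/
lemma memBergman_mul {p α C : ℝ} (hp : 0 ≤ p) {φ f : ℂ → ℂ}
    (hφ : DifferentiableOn ℂ φ unitDisk) (hC : ∀ z ∈ unitDisk, ‖φ z‖ ≤ C)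
    (hf : MemBergman p α f) : MemBergman p α (fun z => φ z * f z) := by
  have hmeas : MeasurableSet unitDisk := Metric.isOpen_ball.measurableSet
  have hd : DifferentiableOn ℂ (fun z => φ z * f z) unitDisk := hφ.mul hf.1
  refine ⟨hd, Integrable.mono' (hf.2.const_mul (C ^ p))
    ((continuousOn_bergmanIntegrand hp α hd.continuousOn).aestronglyMeasurable hmeas)
    (ae_restrict_of_forall_mem hmeas fun z hz => ?_)⟩
  rw [norm_of_nonneg (bergmanIntegrand_nonneg _ _ _ hz)]
  have h := bergmanIntegrand_nonneg p α f hz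
  simp only [bergmanIntegrand, norm_mul, mul_rpow (norm_nonneg _) (norm_nonneg _)] at h ⊢
  rw [mul_assoc]
  exact mul_le_mul_of_nonneg_right (rpow_le_rpow (norm_nonneg _) (hC z hz) hp) h

lemma memBergman_congr {p α : ℝ} {f g : ℂ → ℂ} (hfg : EqOn g f unitDisk)
    (hf : MemBergman p α f) : MemBergman p α g :=
  ⟨hf.1.congr hfg, hf.2.congr_fun (fun z hz => by simp [bergmanIntegrand, hfg hz])
    Metric.isOpen_ball.measurableSet⟩

/-! ### The Hardy space as a vector space -/

lemma memHardy_add {p : ℝ} (hp : 1 ≤ p) {f g : ℂ → ℂ} (hf : MemHardy p f) (hg : MemHardy p g) :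
    MemHardy p (f + g) := by
  obtain ⟨hfd, A, hA⟩ := hf
  obtain ⟨hgd, B, hB⟩ := hg
  have hp0 : 0 ≤ p := by linarith
  refine ⟨hfd.add hgd, 2 ^ p * (A + B), fun r h0 h1 => ?_⟩
  have hcf := continuous_circle_rpow hp0 hfd.continuousOn h0 h1
  have hcg := continuous_circle_rpow hp0 hgd.continuousOn h0 h1
  have hcs := continuous_circle_rpow hp0 (hfd.add hgd).continuousOn h0 h1
  have hpt : ∀ a b : ℂ, ‖a + b‖ ^ p ≤ 2 ^ p * (‖a‖ ^ p + ‖b‖ ^ p) := by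
    intro a b
    have h1 : ‖a + b‖ ≤ 2 * max ‖a‖ ‖b‖ := by
      have := norm_add_le a b
      have := le_max_left ‖a‖ ‖b‖
      have := le_max_right ‖a‖ ‖b‖
      linarith
    refine (rpow_le_rpow (norm_nonneg _) h1 hp0).trans ?_
    rw [mul_rpow (by norm_num) (by positivity)]
    gcongr
    have ha : 0 ≤ ‖a‖ ^ p := by positivity
    have hb : 0 ≤ ‖b‖ ^ p := by positivity
    rcases max_choice ‖a‖ ‖b‖ with h | h <;> rw [h] <;> linarith
  have hint := intervalIntegral.integral_mono_on (μ := volume) (a := 0) (b := 2 * π) (by positivity)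
    (hcs.intervalIntegrable _ _) (((hcf.add hcg).const_mul (2 ^ p)).intervalIntegrable _ _)
    (fun θ _ => hpt _ _)
  simp only [Pi.add_apply] at hint
  rw [intervalIntegral.integral_const_mul, intervalIntegral.integral_add
    (hcf.intervalIntegrable _ _) (hcg.intervalIntegrable _ _)] at hint
  calc hardyIntegral p (f + g) r ≤ 2 ^ p * (hardyIntegral p f r + hardyIntegral p g r) := by
        simp only [hardyIntegral, Pi.add_apply]
        refine (mul_le_mul_of_nonneg_left hint (by positivity)).trans (le_of_eq (by ring))
    _ ≤ _ := by
        gcongr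
        exacts [hA r h0 h1, hB r h0 h1]

lemma memHardy_const_smul {p : ℝ} (c : ℂ) {f : ℂ → ℂ} (hf : MemHardy p f) :
    MemHardy p (c • f) := by
  obtain ⟨hfd, A, hA⟩ := hf
  refine ⟨hfd.const_smul c, ‖c‖ ^ p * A, fun r h0 h1 => ?_⟩
  have : hardyIntegral p (c • f) r = ‖c‖ ^ p * hardyIntegral p f r := by
    simp only [hardyIntegral, Pi.smul_apply, smul_eq_mul, norm_mul,
      mul_rpow (norm_nonneg _) (norm_nonneg _), intervalIntegral.integral_const_mul]
    ring
  rw [this]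
  exact mul_le_mul_of_nonneg_left (hA r h0 h1) (by positivity)

lemma memHardy_of_bounded {p M : ℝ} (hp : 0 ≤ p) {f : ℂ → ℂ} (hf : DifferentiableOn ℂ f unitDisk)
    (hM : ∀ z ∈ unitDisk, ‖f z‖ ≤ M) : MemHardy p f := by
  refine ⟨hf, M ^ p, fun r h0 h1 => ?_⟩
  have h := intervalIntegral.integral_mono_on (μ := volume) (a := 0) (b := 2 * π) (by positivity)
    ((continuous_circle_rpow hp hf.continuousOn h0 h1).intervalIntegrable _ _)
    (continuous_const.intervalIntegrable _ _)
    (fun θ _ => rpow_le_rpow (norm_nonneg _) (hM _ (circle_mem_unitDisk h0 h1 θ)) hp)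
  rw [intervalIntegral.integral_const, sub_zero, smul_eq_mul] at h
  rw [hardyIntegral, one_div, inv_mul_le_iff₀ (by positivity)]
  exact h

/-! ### Cancelling an inner factor -/

/-- An inner function does not vanish identically: its radial limits have modulus one. -/
lemma IsInner.exists_ne_zero {φ : ℂ → ℂ} (hφ : IsInner φ) : ∃ z ∈ unitDisk, φ z ≠ 0 := by
  by_contra! h
  obtain ⟨-, -, hae⟩ := hφ
  have hne : (ae (volume.restrict (Ico (0:ℝ) (2 * π)))).NeBot := by
    rw [ae_neBot, Ne, Measure.restrict_eq_zero]
    simp [pi_pos]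
  obtain ⟨θ, L, hL, hlim⟩ := hae.exists
  have h0 : Tendsto (fun r : ℝ => φ ((r : ℂ) * Complex.exp (θ * Complex.I))) (𝓝[<] (1:ℝ)) (𝓝 0) := by
    refine tendsto_const_nhds.congr' ?_
    filter_upwards [Ioo_mem_nhdsLT (zero_lt_one (α := ℝ))] with r hr
    exact (h _ (circle_mem_unitDisk hr.1.le hr.2 θ)).symm
  rw [tendsto_nhds_unique hlim h0] at hL
  simp at hL

/-- Analytic functions on the disk can be cancelled by a factor that is not identically zero. -/
lemma eqOn_of_mul_eqOn {φ f h : ℂ → ℂ} (hφ : DifferentiableOn ℂ φ unitDisk)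
    (hne : ∃ z ∈ unitDisk, φ z ≠ 0) (hf : DifferentiableOn ℂ f unitDisk)
    (hh : DifferentiableOn ℂ h unitDisk)
    (heq : EqOn (fun z => φ z * f z) (fun z => φ z * h z) unitDisk) : EqOn f h unitDisk := by
  obtain ⟨z₀, hz₀, hφz⟩ := hne
  have ho : IsOpen unitDisk := Metric.isOpen_ball
  refine (hf.analyticOnNhd ho).eqOn_of_preconnected_of_eventuallyEq (hh.analyticOnNhd ho)
    (convex_ball _ _).isPreconnected hz₀ ?_
  filter_upwards [ho.mem_nhds hz₀,
    (hφ.continuousOn.continuousAt (ho.mem_nhds hz₀)).eventually_ne hφz] with z hz hzne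
  exact mul_left_cancel₀ hzne (heq hz)

/-! ### The test function `(1 - z)^(-1/p)` -/

/-- The function `(1 - z)^(-1/p)`, which lies in `A^p_α` for every `α > -1` but not in `H^p`. -/
def cauchyRoot (p : ℝ) (z : ℂ) : ℂ := (1 - z) ^ ((-(1 / p) : ℝ) : ℂ)

lemma norm_cauchyRoot (p : ℝ) (z : ℂ) : ‖cauchyRoot p z‖ = ‖1 - z‖ ^ (-(1 / p)) :=
  Complex.norm_cpow_real _ _

lemma norm_cauchyRoot_rpow {p : ℝ} (hp : 1 ≤ p) (z : ℂ) :
    ‖cauchyRoot p z‖ ^ p = ‖1 - z‖⁻¹ := by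
  rw [norm_cauchyRoot, ← rpow_mul (norm_nonneg _), ← rpow_neg_one]
  congr 1
  field_simp

lemma one_sub_norm_le (z : ℂ) : 1 - ‖z‖ ≤ ‖1 - z‖ := by
  simpa using norm_sub_norm_le (1 : ℂ) z

lemma differentiableOn_cauchyRoot (p : ℝ) : DifferentiableOn ℂ (cauchyRoot p) unitDisk := by
  refine DifferentiableOn.cpow_const (by fun_prop) fun z hz => ?_
  have h : ‖z‖ < 1 := by simpa [unitDisk] using hz
  left
  have := Complex.re_le_norm z
  simp only [Complex.sub_re, Complex.one_re]
  linarith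

/-- Radial dilation moves a point of the closed disk towards `1` by a factor of at most two. -/
lemma norm_one_sub_le_two_mul {r : ℝ} {z : ℂ} (h0 : 0 ≤ r) (h1 : r ≤ 1) (hz : ‖z‖ ≤ 1) :
    ‖1 - z‖ ≤ 2 * ‖1 - r * z‖ := by
  have hrz : ‖(r : ℂ) * z‖ ≤ r := by
    rw [norm_mul, Complex.norm_real, norm_of_nonneg h0]
    exact mul_le_of_le_one_right h0 hz
  have h2 : 1 - r ≤ ‖1 - r * z‖ := by linarith [one_sub_norm_le ((r : ℂ) * z)]
  have h3 : ‖((1 - r : ℝ) : ℂ) * z‖ ≤ 1 - r := by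
    rw [norm_mul, Complex.norm_real, norm_of_nonneg (by linarith)]
    exact mul_le_of_le_one_right (by linarith) hz
  have h4 : (1 : ℂ) - z = (1 - r * z) - ((1 - r : ℝ) : ℂ) * z := by push_cast; ring
  have h5 := norm_sub_le (1 - (r : ℂ) * z) (((1 - r : ℝ) : ℂ) * z)
  rw [← h4] at h5
  linarith

lemma abs_div_pi_le {r θ : ℝ} (h0 : 0 ≤ r) (h1 : r ≤ 1) (hθ : |θ| ≤ π) :
    |θ| / π ≤ ‖1 - r * Complex.exp (θ * Complex.I)‖ := by
  have h := norm_one_sub_le_two_mul h0 h1 (Complex.norm_exp_ofReal_mul_I θ).le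
  have h2 := Complex.norm_exp_I_mul_ofReal_sub_one θ
  rw [norm_sub_rev, mul_comm Complex.I, norm_mul, norm_two, norm_eq_abs] at h2
  have h3 := mul_abs_le_abs_sin (x := θ / 2) (by rw [abs_div, abs_two]; linarith)
  rw [abs_div, abs_two] at h3
  have h4 : 2 / π * (|θ| / 2) = |θ| / π := by ring
  linarith

/-- The means of `|1 - z|⁻¹` grow only logarithmically; any power bound `(1 - r)^(-ε)` suffices,
and it follows by interpolating between `1 - r ≤ |1 - z|` and `|θ| / π ≤ |1 - z|`. -/
lemma hardyIntegral_cauchyRoot_le {p ε : ℝ} (hp : 1 ≤ p) (hε0 : 0 < ε) (hε1 : ε ≤ 1) :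
    ∃ C : ℝ, ∀ r : ℝ, 0 ≤ r → r < 1 →
      hardyIntegral p (cauchyRoot p) r ≤ C * (1 - r) ^ (-ε) := by
  have hpi := pi_pos
  refine ⟨(1 / (2 * π)) * ∫ θ in (-π)..π, (|θ| / π) ^ (ε - 1), fun r h0 h1 => ?_⟩
  have hint : IntervalIntegrable (fun θ : ℝ => (|θ| / π) ^ (ε - 1)) volume (-π) π := by
    have hb : IntervalIntegrable (fun θ : ℝ => (|θ| / π) ^ (ε - 1)) volume 0 π := by
      refine ((intervalIntegral.intervalIntegrable_rpow' (a := 0) (b := π)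
        (show -1 < ε - 1 by linarith)).div_const (π ^ (ε - 1))).congr ?_
      intro θ hθ
      rw [uIoc_of_le hpi.le] at hθ
      simp only
      rw [abs_of_pos hθ.1, div_rpow hθ.1.le hpi.le]
    have ha := ((IntervalIntegrable.iff_comp_neg).1 hb).symm
    simp only [abs_neg, neg_zero] at ha
    exact ha.trans hb
  rw [hardyIntegral_eq_symm, mul_assoc]
  refine mul_le_mul_of_nonneg_left ?_ (by positivity)
  rw [← intervalIntegral.integral_mul_const]
  -- The bound can fail at `θ = 0`, where the singular factor has the junk value `0 ^ (ε - 1)`.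
  refine intervalIntegral.integral_mono_ae_restrict (by linarith)
    ((continuous_circle_rpow (by linarith) (differentiableOn_cauchyRoot p).continuousOn
      h0 h1).intervalIntegrable _ _) (hint.mul_const _) ?_
  filter_upwards [ae_restrict_mem measurableSet_Icc,
    ae_restrict_of_ae (Measure.ae_ne volume (0:ℝ))] with θ hθ hne
  rw [norm_cauchyRoot_rpow hp]
  set d := ‖1 - (r : ℂ) * Complex.exp (θ * Complex.I)‖ with hd
  have hd1 : |θ| / π ≤ d := abs_div_pi_le h0 h1.le (abs_le.2 hθ)
  have hd2 : 1 - r ≤ d := by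
    have := one_sub_norm_le ((r : ℂ) * Complex.exp (θ * Complex.I))
    simpa [Complex.norm_exp_ofReal_mul_I, abs_of_nonneg h0] using this
  have hθ0 : 0 < |θ| / π := div_pos (abs_pos.2 hne) hpi
  have hd0 : 0 < d := hθ0.trans_le hd1
  calc d⁻¹ = d ^ (ε - 1) * d ^ (-ε) := by
        rw [← rpow_add hd0, ← rpow_neg_one]
        congr 1
        ring
    _ ≤ (|θ| / π) ^ (ε - 1) * (1 - r) ^ (-ε) :=
        mul_le_mul (rpow_le_rpow_of_nonpos hθ0 hd1 (by linarith))
          (rpow_le_rpow_of_nonpos (by linarith) hd2 (by linarith)) (by positivity)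
          (by positivity)

lemma not_memHardy_cauchyRoot {p : ℝ} (hp : 1 ≤ p) : ¬ MemHardy p (cauchyRoot p) := by
  rintro ⟨-, C, hC⟩
  have hpi := pi_pos
  set K : ℝ := 2 * π * |C| + 1 with hK
  have hK0 : 0 < K := by positivity
  set δ : ℝ := rexp (-K) with hδ
  have hδ0 : 0 < δ := exp_pos _
  have hδ1 : δ < 1 := by rw [hδ, exp_lt_one_iff]; linarith
  have h0 : 0 ≤ 1 - δ := by linarith
  have h1 : 1 - δ < 1 := by linarith
  have h := hC (1 - δ) h0 h1
  rw [hardyIntegral, one_div, inv_mul_le_iff₀ (by positivity)] at h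
  have hcont := continuous_circle_rpow (p := p) (by linarith)
    (differentiableOn_cauchyRoot p).continuousOn h0 h1
  have hlow : K ≤ ∫ θ in (0:ℝ)..1,
      ‖cauchyRoot p (((1 - δ : ℝ) : ℂ) * Complex.exp (θ * Complex.I))‖ ^ p := by
    calc K = -log δ := by rw [hδ, log_exp, neg_neg]
      _ ≤ log ((1 + δ) / δ) := by
          rw [log_div (by positivity) hδ0.ne']
          linarith [log_nonneg (show 1 ≤ 1 + δ by linarith)]
      _ = ∫ θ in (0:ℝ)..1, (θ + δ)⁻¹ := by
          rw [intervalIntegral.integral_comp_add_right (fun x => x⁻¹), zero_add,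
            integral_inv_of_pos hδ0 (by positivity)]
      _ ≤ _ := by
          refine intervalIntegral.integral_mono_on zero_le_one ?_
            (hcont.intervalIntegrable _ _) fun θ hθ => ?_
          · refine ContinuousOn.intervalIntegrable ?_
            rw [uIcc_of_le zero_le_one]
            exact ContinuousOn.inv₀ (by fun_prop) fun θ hθ => by have := hθ.1; positivity
          · rw [norm_cauchyRoot_rpow hp]
            refine inv_anti₀ ?_ ?_
            · refine norm_pos_iff.2 (sub_ne_zero.2 fun he => ?_)
              have := circle_mem_unitDisk h0 h1 θ
              rw [← he] at this
              simp [unitDisk] at this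
            · have e1 : ‖Complex.exp (θ * Complex.I) - 1‖ ≤ θ := by
                have := norm_exp_I_mul_ofReal_sub_one_le (x := θ)
                rwa [mul_comm, norm_of_nonneg hθ.1] at this
              have e2 : (1 : ℂ) - ((1 - δ : ℝ) : ℂ) * Complex.exp (θ * Complex.I)
                  = -(Complex.exp (θ * Complex.I) - 1) + δ * Complex.exp (θ * Complex.I) := by
                push_cast; ring
              rw [e2]
              refine (norm_add_le _ _).trans ?_
              rw [norm_neg, norm_mul, Complex.norm_exp_ofReal_mul_I, Complex.norm_real,
                norm_of_nonneg hδ0.le]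
              linarith
  have hmono := intervalIntegral.integral_mono_interval (μ := volume) (a := (0:ℝ)) (b := 1)
    (c := 0) (d := 2 * π) le_rfl zero_le_one (by linarith [pi_gt_three])
    (Eventually.of_forall fun θ => by positivity) (hcont.intervalIntegrable _ _)
  have hCabs : 2 * π * C ≤ 2 * π * |C| := by
    gcongr
    exact le_abs_self C
  linarith

lemma memBergman_cauchyRoot {p α : ℝ} (hp : 1 ≤ p) (hα : -1 < α) :
    MemBergman p α (cauchyRoot p) := by
  have hε0 : 0 < min ((α + 1) / 2) 1 := lt_min (by linarith) one_pos
  obtain ⟨C, hC⟩ := hardyIntegral_cauchyRoot_le hp hε0 (min_le_right _ _)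
  exact memBergman_of_hardyIntegral_le (by linarith)
    (by linarith [min_le_left ((α + 1) / 2) 1]) (differentiableOn_cauchyRoot p) hC

/-! ### Approximation by dilates -/

/-- The dilates `f(rz)` of `f(z) = (1 - z)^(-1/p)` are comparable to `f` uniformly in `r`. -/
lemma norm_cauchyRoot_dilate_le {p r : ℝ} (hp : 1 ≤ p) (h0 : 0 ≤ r) (h1 : r ≤ 1) {z : ℂ}
    (hz : z ∈ unitDisk) : ‖cauchyRoot p (r * z)‖ ≤ 2 * ‖cauchyRoot p z‖ := by
  have hz1 : ‖z‖ < 1 := by simpa [unitDisk] using hz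
  have hpos : 0 < ‖1 - z‖ := by linarith [one_sub_norm_le z]
  have hle := norm_one_sub_le_two_mul h0 h1 hz1.le
  have hs0 : 0 ≤ 1 / p := by positivity
  have hs1 : 1 / p ≤ 1 := by rw [div_le_one (by linarith)]; exact hp
  rw [norm_cauchyRoot, norm_cauchyRoot]
  calc ‖1 - r * z‖ ^ (-(1 / p)) ≤ (‖1 - z‖ / 2) ^ (-(1 / p)) :=
        rpow_le_rpow_of_nonpos (by positivity) (by linarith) (by linarith)
    _ = 2 ^ (1 / p) * ‖1 - z‖ ^ (-(1 / p)) := by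
        rw [div_rpow hpos.le (by norm_num), rpow_neg (by norm_num : (0:ℝ) ≤ 2), div_inv_eq_mul,
          mul_comm]
    _ ≤ 2 * ‖1 - z‖ ^ (-(1 / p)) := by
        gcongr
        calc (2:ℝ) ^ (1 / p) ≤ 2 ^ (1:ℝ) := rpow_le_rpow_of_exponent_le (by norm_num) hs1
          _ = 2 := rpow_one 2

lemma dilate_mem_unitDisk {r : ℝ} (h0 : 0 ≤ r) (h1 : r ≤ 1) {z : ℂ} (hz : z ∈ unitDisk) :
    (r : ℂ) * z ∈ unitDisk := by
  have hz1 : ‖z‖ < 1 := by simpa [unitDisk] using hz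
  simp only [unitDisk, Metric.mem_ball, dist_zero_right, norm_mul, Complex.norm_real,
    norm_of_nonneg h0]
  exact (mul_le_of_le_one_left (norm_nonneg z) h1).trans_lt hz1

lemma differentiableOn_cauchyRoot_dilate (p : ℝ) {r : ℝ} (h0 : 0 ≤ r) (h1 : r ≤ 1) :
    DifferentiableOn ℂ (fun z => cauchyRoot p (r * z)) unitDisk :=
  (differentiableOn_cauchyRoot p).comp (by fun_prop) fun _ hz => dilate_mem_unitDisk h0 h1 hz

lemma memHardy_cauchyRoot_dilate {p r : ℝ} (hp : 1 ≤ p) (h0 : 0 ≤ r) (h1 : r < 1) :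
    MemHardy p (fun z => cauchyRoot p (r * z)) := by
  refine memHardy_of_bounded (M := (1 - r) ^ (-(1 / p))) (by linarith)
    (differentiableOn_cauchyRoot_dilate p h0 h1.le) fun z hz => ?_
  have hz1 : ‖z‖ < 1 := by simpa [unitDisk] using hz
  rw [norm_cauchyRoot]
  have hp' : 0 ≤ 1 / p := by positivity
  refine rpow_le_rpow_of_nonpos (by linarith) ?_ (by linarith)
  refine le_trans ?_ (one_sub_norm_le _)
  rw [norm_mul, Complex.norm_real, norm_of_nonneg h0]
  nlinarith

/-- Dominated convergence: `φ(z) f(rₙz)` tends to `φ(z) f(z)` in the Bergman norm. -/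
lemma tendsto_bergmanNorm_dilate {p α C : ℝ} (hp : 1 ≤ p) (hα : -1 < α) {φ : ℂ → ℂ}
    (hφ : DifferentiableOn ℂ φ unitDisk) (hC : ∀ z ∈ unitDisk, ‖φ z‖ ≤ C) {r : ℕ → ℝ}
    (hr0 : ∀ n, 0 ≤ r n) (hr1 : ∀ n, r n ≤ 1) (hr : Tendsto r atTop (𝓝 1)) :
    Tendsto (fun n => bergmanNorm p α
      ((fun z => φ z * cauchyRoot p (r n * z)) - fun z => φ z * cauchyRoot p z))
      atTop (𝓝 0) := by
  have hp0 : 0 < p := by linarith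
  have hmeas : MeasurableSet unitDisk := Metric.isOpen_ball.measurableSet
  have hf := memBergman_cauchyRoot hp hα
  have hlim : Tendsto (fun n => ∫ z in unitDisk, bergmanIntegrand p α
      ((fun z => φ z * cauchyRoot p (r n * z)) - fun z => φ z * cauchyRoot p z) z)
      atTop (𝓝 (∫ z in unitDisk, (0:ℝ))) := by
    refine tendsto_integral_of_dominated_convergence
      (fun z => (C * 3) ^ p * bergmanIntegrand p α (cauchyRoot p) z) (fun n => ?_)
      (hf.2.const_mul _) (fun n => ?_) ?_
    · refine (continuousOn_bergmanIntegrand hp0.le α ?_).aestronglyMeasurable hmeas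
      exact ((hφ.mul (differentiableOn_cauchyRoot_dilate p (hr0 n) (hr1 n))).sub
        (hφ.mul (differentiableOn_cauchyRoot p))).continuousOn
    · refine ae_restrict_of_forall_mem hmeas fun z hz => ?_
      rw [norm_of_nonneg (bergmanIntegrand_nonneg _ _ _ hz)]
      have hz1 : ‖z‖ < 1 := by simpa [unitDisk] using hz
      have hw : 0 ≤ (1 - ‖z‖ ^ 2) ^ α := rpow_nonneg (by nlinarith [norm_nonneg z]) _
      have hC0 : 0 ≤ C := (norm_nonneg _).trans (hC z hz)
      simp only [bergmanIntegrand, Pi.sub_apply]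
      rw [← mul_assoc, ← mul_rpow (by positivity) (norm_nonneg _)]
      refine mul_le_mul_of_nonneg_right (rpow_le_rpow (norm_nonneg _) ?_ hp0.le) hw
      rw [← mul_sub, norm_mul, mul_assoc]
      refine mul_le_mul (hC z hz) ?_ (norm_nonneg _) hC0
      refine (norm_sub_le _ _).trans ?_
      linarith [norm_cauchyRoot_dilate_le hp (hr0 n) (hr1 n) hz]
    · refine ae_restrict_of_forall_mem hmeas fun z hz => ?_
      have hcont : ContinuousAt (cauchyRoot p) z :=
        (differentiableOn_cauchyRoot p).continuousOn.continuousAt (Metric.isOpen_ball.mem_nhds hz)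
      have h1 : Tendsto (fun n => (r n : ℂ) * z) atTop (𝓝 z) := by
        simpa using ((Complex.continuous_ofReal.tendsto 1).comp hr).mul_const z
      have h2 : Tendsto (fun n => φ z * cauchyRoot p (r n * z) - φ z * cauchyRoot p z)
          atTop (𝓝 0) := by
        simpa using ((hcont.tendsto.comp h1).const_mul (φ z)).sub_const (φ z * cauchyRoot p z)
      have h3 := (h2.norm.rpow_const (p := p) (Or.inr hp0.le)).mul_const ((1 - ‖z‖ ^ 2) ^ α)
      simpa [bergmanIntegrand, zero_rpow hp0.ne'] using h3
  have h := (hlim.const_mul ((α + 1) / π)).rpow_const (p := 1 / p) (Or.inr (by positivity))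
  simpa [bergmanNorm, zero_rpow (inv_ne_zero hp0.ne')] using h

/-- For an inner function `φ`, the set `φ H^p(𝔻)` is a linear subspace of the Bergman
space `A^p_α(𝔻)` which is not closed in the Bergman norm. -/
theorem inner_mul_hardy_linear_subspace_not_closed
    (p α : ℝ) (hp : 1 ≤ p) (hα : -1 < α)
    (φ : ℂ → ℂ) (hφ : IsInner φ) :
    (∀ g : ℂ → ℂ, MemMulHardy p φ g → MemBergman p α g) ∧
    MemMulHardy p φ (fun _ => (0:ℂ)) ∧
    (∀ g₁ g₂ : ℂ → ℂ, MemMulHardy p φ g₁ → MemMulHardy p φ g₂ → MemMulHardy p φ (g₁ + g₂)) ∧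
    (∀ (c : ℂ) (g : ℂ → ℂ), MemMulHardy p φ g → MemMulHardy p φ (c • g)) ∧
    (∃ (F : ℕ → ℂ → ℂ) (g : ℂ → ℂ), (∀ n, MemMulHardy p φ (F n)) ∧ MemBergman p α g ∧
      Filter.Tendsto (fun n => bergmanNorm p α (F n - g)) Filter.atTop (nhds 0) ∧
      ¬ MemMulHardy p φ g) := by
  have hp0 : 0 < p := by linarith
  obtain ⟨hφd, ⟨C, hC⟩, -⟩ := id hφ
  refine ⟨?_, ?_, ?_, ?_, ?_⟩
  · rintro g ⟨h, ⟨hd, A, hA⟩, hg⟩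
    exact memBergman_congr hg (memBergman_mul hp0.le hφd hC
      (memBergman_of_hardyIntegral_le (ε := 0) hp0.le (by linarith) hd (by simpa using hA)))
  · exact ⟨fun _ => 0, memHardy_of_bounded (M := 0) hp0.le (by fun_prop) (by simp),
      fun z _ => by simp⟩
  · rintro g₁ g₂ ⟨h₁, hh₁, e₁⟩ ⟨h₂, hh₂, e₂⟩
    refine ⟨h₁ + h₂, memHardy_add hp hh₁ hh₂, fun z hz => ?_⟩
    simp only [Pi.add_apply, e₁ hz, e₂ hz]
    ring
  · rintro c g ⟨h, hh, e⟩
    refine ⟨c • h, memHardy_const_smul c hh, fun z hz => ?_⟩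
    simp only [Pi.smul_apply, smul_eq_mul, e hz]
    ring
  · have hr : Tendsto (fun n : ℕ => 1 - 1 / ((n : ℝ) + 1)) atTop (𝓝 1) := by
      simpa using tendsto_one_div_add_atTop_nhds_zero_nat (𝕜 := ℝ) |>.const_sub 1
    have hr0 : ∀ n : ℕ, 0 ≤ 1 - 1 / ((n : ℝ) + 1) := fun n => by
      rw [sub_nonneg, div_le_one (by positivity)]
      linarith [n.cast_nonneg (α := ℝ)]
    have hr1 : ∀ n : ℕ, 1 - 1 / ((n : ℝ) + 1) < 1 := fun n => by
      have : 0 < 1 / ((n : ℝ) + 1) := by positivity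
      linarith
    refine ⟨fun n z => φ z * cauchyRoot p ((1 - 1 / ((n : ℝ) + 1) : ℝ) * z),
      fun z => φ z * cauchyRoot p z,
      fun n => ⟨_, memHardy_cauchyRoot_dilate hp (hr0 n) (hr1 n), fun z _ => rfl⟩,
      memBergman_mul hp0.le hφd hC (memBergman_cauchyRoot hp hα),
      tendsto_bergmanNorm_dilate hp hα hφd hC hr0 (fun n => (hr1 n).le) hr, ?_⟩
    rintro ⟨h, ⟨hd, A, hA⟩, e⟩
    have heq := eqOn_of_mul_eqOn hφd hφ.exists_ne_zero (differentiableOn_cauchyRoot p) hd e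
    refine not_memHardy_cauchyRoot hp ⟨differentiableOn_cauchyRoot p, A, fun r h0 h1 => ?_⟩
    refine le_of_eq_of_le ?_ (hA r h0 h1)
    simp only [hardyIntegral, heq (circle_mem_unitDisk h0 h1 _)]
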